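/- For every n-qubit mixed state ρ and every Lagrangian subspace L ⊆ 𝔽₂^{2n}, the stabilizer fidelity satisfies F(ρ) ≥ 2^n · Σ_{x ∈ L} p̂_ρ(x). -/

import Mathlib

open scoped BigOperators ComplexOrder

/-- The phase space `𝔽₂^{2n}`, written as pairs `(a, b)` with `a, b ∈ 𝔽₂ⁿ`. -/
abbrev PhaseSpace (n : ℕ) := (Fin n → ZMod 2) × (Fin n → ZMod 2)

/-- The symplectic product `[x, y] = a·d + b·c` for `x = (a,b)`, `y = (c,d)`. -/
def sympl {n : ℕ} (x y : PhaseSpace n) : ZMod 2 :=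
  ∑ i, x.1 i * y.2 i + ∑ i, x.2 i * y.1 i

/-- The symplectic Fourier transform `f̂(a) = 4^{-n} ∑_x (-1)^{[a,x]} f(x)`. -/
noncomputable def sft {n : ℕ} (f : PhaseSpace n → ℝ) (a : PhaseSpace n) : ℝ :=
  (1 / 4 ^ n) * ∑ x, (-1 : ℝ) ^ (sympl a x).val * f x

/-- The symplectic complement of a set `S ⊆ 𝔽₂^{2n}`. -/
def symplComplement {n : ℕ} (S : Set (PhaseSpace n)) : Set (PhaseSpace n) :=
  {x | ∀ a ∈ S, sympl x a = 0}

/-- The Weyl operator `W_x = i^{a·b} X^a Z^b` for `x = (a,b)`, as a `2^n × 2^n` matrix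
indexed by `𝔽₂ⁿ`: `(W_x)_{k,j} = i^{a·b} (-1)^{b·j} [k = j + a]`. -/
noncomputable def Weyl {n : ℕ} (x : PhaseSpace n) :
    Matrix (Fin n → ZMod 2) (Fin n → ZMod 2) ℂ :=
  fun k j => Complex.I ^ (∑ i, (x.1 i).val * (x.2 i).val) *
    (if k = j + x.1 then (-1 : ℂ) ^ (∑ i, (x.2 i).val * (j i).val) else 0)

/-- `p_H(x) = 2^{-n} tr(W_x H)²` (the trace is real for Hermitian `H`). -/
noncomputable def pFun {n : ℕ} (H : Matrix (Fin n → ZMod 2) (Fin n → ZMod 2) ℂ)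
    (x : PhaseSpace n) : ℝ :=
  ((Weyl x * H).trace.re) ^ 2 / 2 ^ n

/-- A set is Lagrangian if it equals its symplectic complement. -/
def IsLagrangian {n : ℕ} (S : Set (PhaseSpace n)) : Prop :=
  S = symplComplement S

/-- The outer product `|φ⟩⟨φ|` of a vector `φ ∈ ℂ^{2^n}`. -/
noncomputable def outer {n : ℕ} (φ : (Fin n → ZMod 2) → ℂ) :
    Matrix (Fin n → ZMod 2) (Fin n → ZMod 2) ℂ :=
  Matrix.vecMulVec φ (fun j => starRingEnd ℂ (φ j))

/-- `Weyl(σ) = {x : tr(W_x σ) = ±1}`. -/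
def weylSet {n : ℕ} (σ : Matrix (Fin n → ZMod 2) (Fin n → ZMod 2) ℂ) :
    Set (PhaseSpace n) :=
  {x | (Weyl x * σ).trace = 1 ∨ (Weyl x * σ).trace = -1}

/-- A unit vector `φ` is a stabilizer state iff `Weyl(|φ⟩⟨φ|)` is Lagrangian. -/
def IsStabilizerState {n : ℕ} (φ : (Fin n → ZMod 2) → ℂ) : Prop :=
  (∑ j, Complex.normSq (φ j)) = 1 ∧ IsLagrangian (weylSet (outer φ))

/-- The stabilizer fidelity `F(ρ) = max_{stabilizer |φ⟩} ⟨φ|ρ|φ⟩ = max tr(ρ|φ⟩⟨φ|)`. -/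
noncomputable def stabFidelity {n : ℕ}
    (ρ : Matrix (Fin n → ZMod 2) (Fin n → ZMod 2) ℂ) : ℝ :=
  ⨆ φ : {φ : (Fin n → ZMod 2) → ℂ // IsStabilizerState φ}, ((ρ * outer φ.1).trace).re

/-!
Poisson summation over `L` turns `2^n ∑_{x ∈ L} p̂_ρ(x)` into `∑_{x ∈ L} p_ρ(x)`. The Weyl operators
`W_x` with `x ∈ L` are commuting involutions, so they have a joint unit eigenvector `φ`, and every
translate `W_v φ` is again such an eigenvector, hence a stabilizer state. The translates form a
tight frame, so the overlaps `q_v = ⟨W_v φ|ρ|W_v φ⟩` lie in `[0, F(ρ)]`, sum to `2^n`, and satisfy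
`p_ρ(x) = 2^n q̂(x)²` for `x ∈ L`. As `4^n q̂²` is the Fourier transform of the autocorrelation of
`q`, a second Poisson summation gives
`∑_{x ∈ L} p_ρ(x) = 4^{-n} ∑_{w ∈ L} ∑_v q_v q_{v+w} ≤ 4^{-n} · 2^n · F(ρ) · 2^n`.
-/

open Matrix

section SignCharacter

lemma zmod_two_eq_one_of_ne_zero {z : ZMod 2} (hz : z ≠ 0) : z = 1 :=
  Fin.eq_one_of_ne_zero z hz

variable (R : Type*) [CommRing R]

/-- The nontrivial additive character `z ↦ (-1)^z` of `𝔽₂`, with values in a ring `R`. -/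
def signChar : AddChar (ZMod 2) R :=
  AddChar.zmodChar 2 (neg_one_sq : (-1 : R) ^ 2 = 1)

variable {R}

lemma signChar_natCast (m : ℕ) : signChar R m = (-1) ^ m :=
  AddChar.zmodChar_apply' _ m

@[simp]
lemma signChar_one : signChar R 1 = -1 := by
  simpa using signChar_natCast (R := R) 1

lemma signChar_eq_one_or_eq_neg_one (z : ZMod 2) : signChar R z = 1 ∨ signChar R z = -1 := by
  obtain rfl | hz := eq_or_ne z 0
  · exact .inl (AddChar.map_zero_eq_one _)
  · exact .inr (by rw [zmod_two_eq_one_of_ne_zero hz, signChar_one])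

lemma signChar_mul_self (z : ZMod 2) : signChar R z * signChar R z = 1 := by
  rcases signChar_eq_one_or_eq_neg_one (R := R) z with h | h <;> simp [h]

lemma ofReal_signChar (z : ZMod 2) : (signChar ℝ z : ℂ) = signChar ℂ z := by
  simp [signChar, AddChar.zmodChar_apply]

lemma star_signChar (z : ZMod 2) : star (signChar ℂ z) = signChar ℂ z := by
  rw [← ofReal_signChar, Complex.star_def, Complex.conj_ofReal]

lemma signChar_eq_one_iff [CharZero R] {z : ZMod 2} : signChar R z = 1 ↔ z = 0 := by
  obtain rfl | hz := eq_or_ne z 0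
  · simp
  · rw [zmod_two_eq_one_of_ne_zero hz]
    norm_num

lemma sum_signChar_addMonoidHom [IsDomain R] [CharZero R] {G : Type*} [AddGroup G] [Fintype G]
    (f : G →+ ZMod 2) [Decidable (f = 0)] :
    ∑ x, signChar R (f x) = if f = 0 then (Fintype.card G : R) else 0 := by
  classical
  have trivial_iff : (signChar R).compAddMonoidHom f = 0 ↔ f = 0 := by
    simp [DFunLike.ext_iff, signChar_eq_one_iff]
  simpa [trivial_iff] using AddChar.sum_eq_ite ((signChar R).compAddMonoidHom f)

end SignCharacter

section SymplecticForm

variable {n : ℕ}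

lemma sympl_eq_dotProduct (x y : PhaseSpace n) : sympl x y = x.1 ⬝ᵥ y.2 + x.2 ⬝ᵥ y.1 := rfl

lemma sympl_comm (x y : PhaseSpace n) : sympl x y = sympl y x := by
  simp only [sympl_eq_dotProduct, dotProduct_comm, add_comm]

lemma sympl_add_right (x y z : PhaseSpace n) : sympl x (y + z) = sympl x y + sympl x z := by
  simp only [sympl_eq_dotProduct, Prod.fst_add, Prod.snd_add, dotProduct_add]
  abel

lemma sympl_add_left (x y z : PhaseSpace n) : sympl (x + y) z = sympl x z + sympl y z := by
  simp only [sympl_comm _ z, sympl_add_right]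

@[simp]
lemma sympl_zero_left (y : PhaseSpace n) : sympl 0 y = 0 := by
  simp [sympl_eq_dotProduct]

lemma eq_zero_of_sympl_eq_zero {x : PhaseSpace n} (h : ∀ y, sympl x y = 0) : x = 0 := by
  refine Prod.ext (dotProduct_eq_zero _ fun b => ?_) (dotProduct_eq_zero _ fun a => ?_)
  · simpa [sympl_eq_dotProduct] using h (0, b)
  · simpa [sympl_eq_dotProduct] using h (a, 0)

/-- The additive map `y ↦ [x, y]`. -/
def symplHom (x : PhaseSpace n) : PhaseSpace n →+ ZMod 2 :=
  AddMonoidHom.mk' (sympl x) (sympl_add_right x)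

lemma symplHom_eq_zero_iff {x : PhaseSpace n} : symplHom x = 0 ↔ x = 0 := by
  refine ⟨fun h => eq_zero_of_sympl_eq_zero fun y => DFunLike.congr_fun h y, ?_⟩
  rintro rfl
  ext1 y
  exact sympl_zero_left y

lemma sum_signChar_sympl (x : PhaseSpace n) :
    ∑ y, signChar ℝ (sympl x y) = if x = 0 then 4 ^ n else 0 := by
  classical
  have card_eq : (Fintype.card (PhaseSpace n) : ℝ) = 4 ^ n := by
    simp [← mul_pow]
  have h := sum_signChar_addMonoidHom (R := ℝ) (symplHom x)
  rwa [if_congr symplHom_eq_zero_iff card_eq rfl] at h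

lemma sum_signChar_dotProduct (z : Fin n → ZMod 2) :
    ∑ b, signChar ℂ (b ⬝ᵥ z) = if z = 0 then 2 ^ n else 0 := by
  classical
  let dotHom : (Fin n → ZMod 2) →+ ZMod 2 :=
    AddMonoidHom.mk' (· ⬝ᵥ z) fun a b => add_dotProduct a b z
  have dotHom_eq_zero_iff : dotHom = 0 ↔ z = 0 := by
    refine ⟨fun h => dotProduct_eq_zero z fun b => ?_, ?_⟩
    · rw [dotProduct_comm]
      exact DFunLike.congr_fun h b
    · rintro rfl
      exact DFunLike.ext _ _ fun b => dotProduct_zero b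
  have card_eq : (Fintype.card (Fin n → ZMod 2) : ℂ) = 2 ^ n := by simp
  have h := sum_signChar_addMonoidHom (R := ℂ) dotHom
  rwa [if_congr dotHom_eq_zero_iff card_eq rfl] at h

end SymplecticForm

lemma four_pow_eq_two_pow_mul_two_pow (n : ℕ) : (4 : ℝ) ^ n = 2 ^ n * 2 ^ n := by
  rw [← mul_pow]
  norm_num

section FourierTransform

variable {n : ℕ}

lemma sft_eq_sum_signChar (f : PhaseSpace n → ℝ) (x : PhaseSpace n) :
    sft f x = 1 / 4 ^ n * ∑ y, signChar ℝ (sympl x y) * f y := rfl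

lemma sft_autocorrelation (f : PhaseSpace n → ℝ) (x : PhaseSpace n) :
    sft (fun w => ∑ v, f v * f (v + w)) x = 4 ^ n * sft f x ^ 2 := by
  have shift (v : PhaseSpace n) :
      ∑ w, signChar ℝ (sympl x w) * (f v * f (v + w)) =
        signChar ℝ (sympl x v) * f v * ∑ w, signChar ℝ (sympl x w) * f w := by
    rw [← Equiv.sum_comp (Equiv.addLeft v) fun w => signChar ℝ (sympl x w) * f w, Finset.mul_sum]
    refine Finset.sum_congr rfl fun w _ => ?_
    rw [Equiv.coe_addLeft, sympl_add_right, AddChar.map_add_eq_mul]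
    linear_combination (-signChar ℝ (sympl x w) * f v * f (v + w)) *
      signChar_mul_self (R := ℝ) (sympl x v)
  have sum_eq_sq : ∑ w, signChar ℝ (sympl x w) * ∑ v, f v * f (v + w) =
      (∑ v, signChar ℝ (sympl x v) * f v) ^ 2 := by
    simp only [Finset.mul_sum]
    rw [Finset.sum_comm]
    simp only [shift, ← Finset.sum_mul, sq]
  rw [sft_eq_sum_signChar, sft_eq_sum_signChar, sum_eq_sq]
  field_simp

end FourierTransform

lemma sum_indicator_eq_sum_coe {α M : Type*} [Fintype α] [AddCommMonoid M] (s : Set α) [Fintype s]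
    (f : α → M) : ∑ x, s.indicator f x = ∑ x : s, f x := by
  classical
  rw [Finset.sum_indicator_eq_sum_filter]
  exact Finset.sum_subtype _ (by simp) f

namespace IsLagrangian

variable {n : ℕ} {L : Set (PhaseSpace n)}

lemma mem_iff (hL : IsLagrangian L) {x : PhaseSpace n} : x ∈ L ↔ ∀ y ∈ L, sympl x y = 0 :=
  Set.ext_iff.1 hL x

lemma exists_sympl_eq_one (hL : IsLagrangian L) {x : PhaseSpace n} (hx : x ∉ L) :
    ∃ y ∈ L, sympl x y = 1 := by
  have h := hL.mem_iff.not.1 hx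
  push Not at h
  obtain ⟨y, hy, hxy⟩ := h
  exact ⟨y, hy, zmod_two_eq_one_of_ne_zero hxy⟩

/-- A Lagrangian set, as an additive subgroup of the phase space. -/
def addSubgroup (hL : IsLagrangian L) : AddSubgroup (PhaseSpace n) where
  carrier := L
  zero_mem' := hL.mem_iff.2 fun y _ => sympl_zero_left y
  add_mem' ha hb := hL.mem_iff.2 fun y hy => by
    rw [sympl_add_left, hL.mem_iff.1 ha y hy, hL.mem_iff.1 hb y hy, add_zero]
  neg_mem' {a} ha := by rwa [ZModModule.neg_eq_self a]

lemma zero_mem (hL : IsLagrangian L) : (0 : PhaseSpace n) ∈ L :=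
  hL.addSubgroup.zero_mem

variable [Fintype L]

lemma sum_signChar_eq_indicator_card (hL : IsLagrangian L) (y : PhaseSpace n) :
    ∑ x : L, signChar ℝ (sympl x y) = L.indicator (fun _ => (Fintype.card L : ℝ)) y := by
  classical
  let _ : Fintype hL.addSubgroup := inferInstanceAs (Fintype L)
  let restriction : hL.addSubgroup →+ ZMod 2 := (symplHom y).comp hL.addSubgroup.subtype
  have restriction_eq_zero_iff : restriction = 0 ↔ y ∈ L := by
    rw [hL.mem_iff, DFunLike.ext_iff, Subtype.forall]
    rfl
  have h := sum_signChar_addMonoidHom (R := ℝ) restriction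
  rw [if_congr restriction_eq_zero_iff rfl rfl] at h
  simp only [sympl_comm _ y, Set.indicator_apply]
  exact h

lemma card_eq (hL : IsLagrangian L) : Fintype.card L = 2 ^ n := by
  have card_mul_card : (Fintype.card L : ℝ) * Fintype.card L = 4 ^ n :=
    calc (Fintype.card L : ℝ) * Fintype.card L
        = ∑ y, L.indicator (fun _ => (Fintype.card L : ℝ)) y := by
          simp [sum_indicator_eq_sum_coe]
      _ = ∑ x : L, ∑ y : PhaseSpace n, signChar ℝ (sympl x y) := by
          rw [Finset.sum_comm]
          simp only [hL.sum_signChar_eq_indicator_card]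
      _ = 4 ^ n := by
          simp only [sum_signChar_sympl]
          rw [Fintype.sum_eq_single ⟨0, hL.zero_mem⟩ fun x hx => if_neg (Subtype.coe_ne_coe.2 hx),
            if_pos rfl]
  refine Nat.mul_self_inj.1 ?_
  rw [← mul_pow]
  exact_mod_cast card_mul_card

lemma sum_signChar (hL : IsLagrangian L) (y : PhaseSpace n) :
    ∑ x : L, signChar ℝ (sympl x y) = L.indicator (fun _ => 2 ^ n) y := by
  rw [hL.sum_signChar_eq_indicator_card, hL.card_eq]
  norm_num

theorem sum_sft (hL : IsLagrangian L) (f : PhaseSpace n → ℝ) :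
    2 ^ n * ∑ x : L, sft f x = ∑ y : L, f y :=
  calc 2 ^ n * ∑ x : L, sft f x
      = 2 ^ n / 4 ^ n * ∑ y, (∑ x : L, signChar ℝ (sympl x y)) * f y := by
        simp only [sft_eq_sum_signChar, ← Finset.mul_sum, Finset.sum_mul]
        rw [Finset.sum_comm]
        ring
    _ = 2 ^ n / 4 ^ n * ∑ y, L.indicator (fun y => 2 ^ n * f y) y := by
        simp only [hL.sum_signChar, ← Set.indicator_mul_left]
    _ = ∑ y : L, f y := by
        rw [sum_indicator_eq_sum_coe, ← Finset.mul_sum, four_pow_eq_two_pow_mul_two_pow]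
        field_simp

end IsLagrangian

section WeylOperators

variable {n : ℕ}

/-- The exponent `a · b`, computed in `ℕ`, of the phase `i^{a·b}` of `W_{(a,b)}`. -/
def weylPhaseExponent (x : PhaseSpace n) : ℕ := ∑ i, (x.1 i).val * (x.2 i).val

lemma Weyl_apply (x : PhaseSpace n) (k j : Fin n → ZMod 2) :
    Weyl x k j = Complex.I ^ weylPhaseExponent x *
      if k = j + x.1 then signChar ℂ (x.2 ⬝ᵥ j) else 0 := by
  simp [Weyl, weylPhaseExponent, dotProduct, ← signChar_natCast]

lemma neg_one_pow_weylPhaseExponent (x : PhaseSpace n) :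
    (-1) ^ weylPhaseExponent x = signChar ℂ (x.1 ⬝ᵥ x.2) := by
  simp [weylPhaseExponent, dotProduct, ← signChar_natCast]

@[simp]
lemma Weyl_zero : Weyl (0 : PhaseSpace n) = 1 := by
  ext k j
  simp [Weyl_apply, weylPhaseExponent, Matrix.one_apply]

lemma Weyl_mulVec_apply (x : PhaseSpace n) (φ : (Fin n → ZMod 2) → ℂ) (k : Fin n → ZMod 2) :
    (Weyl x *ᵥ φ) k =
      Complex.I ^ weylPhaseExponent x * signChar ℂ (x.2 ⬝ᵥ (k + x.1)) * φ (k + x.1) := by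
  have eq_add_iff (j : Fin n → ZMod 2) : k = j + x.1 ↔ j = k + x.1 := by
    rw [← ZModModule.sub_eq_add k, eq_sub_iff_add_eq, eq_comm]
  simp [mulVec, dotProduct, Weyl_apply, eq_add_iff]

lemma Weyl_mulVec_Weyl_mulVec (x y : PhaseSpace n) (φ : (Fin n → ZMod 2) → ℂ) :
    Weyl x *ᵥ Weyl y *ᵥ φ = signChar ℂ (sympl x y) • Weyl y *ᵥ Weyl x *ᵥ φ := by
  ext k
  simp only [Pi.smul_apply, smul_eq_mul, Weyl_mulVec_apply, sympl_eq_dotProduct, dotProduct_add,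
    AddChar.map_add_eq_mul, add_right_comm k x.1 y.1, dotProduct_comm x.1 y.2]
  linear_combination (-Complex.I ^ weylPhaseExponent x * Complex.I ^ weylPhaseExponent y *
    signChar ℂ (x.2 ⬝ᵥ k) * signChar ℂ (x.2 ⬝ᵥ x.1) * signChar ℂ (y.2 ⬝ᵥ k) *
    signChar ℂ (y.2 ⬝ᵥ x.1) * signChar ℂ (y.2 ⬝ᵥ y.1) * φ (k + y.1 + x.1)) *
    signChar_mul_self (R := ℂ) (x.2 ⬝ᵥ y.1)

lemma Weyl_mul_comm (x y : PhaseSpace n) :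
    Weyl x * Weyl y = signChar ℂ (sympl x y) • (Weyl y * Weyl x) :=
  ext_of_mulVec_single fun j => by
    simp only [smul_mulVec, ← mulVec_mulVec, Weyl_mulVec_Weyl_mulVec x y]

lemma Weyl_mulVec_Weyl_mulVec_self (x : PhaseSpace n) (φ : (Fin n → ZMod 2) → ℂ) :
    Weyl x *ᵥ Weyl x *ᵥ φ = φ := by
  ext k
  have phase_sq : Complex.I ^ weylPhaseExponent x * Complex.I ^ weylPhaseExponent x =
      signChar ℂ (x.2 ⬝ᵥ x.1) := by
    rw [← mul_pow, Complex.I_mul_I, neg_one_pow_weylPhaseExponent, dotProduct_comm]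
  have sign_sq := signChar_mul_self (R := ℂ) (x.2 ⬝ᵥ k)
  have sign_sq' := signChar_mul_self (R := ℂ) (x.2 ⬝ᵥ x.1)
  rw [Weyl_mulVec_apply, Weyl_mulVec_apply, add_assoc, ZModModule.add_self, add_zero,
    dotProduct_add, AddChar.map_add_eq_mul]
  grind

lemma Weyl_mul_self (x : PhaseSpace n) : Weyl x * Weyl x = 1 :=
  ext_of_mulVec_single fun j => by
    rw [← mulVec_mulVec, Weyl_mulVec_Weyl_mulVec_self, one_mulVec]

lemma conjTranspose_Weyl (x : PhaseSpace n) : (Weyl x)ᴴ = Weyl x := by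
  ext k j
  have star_phase : star (Complex.I ^ weylPhaseExponent x) =
      signChar ℂ (x.2 ⬝ᵥ x.1) * Complex.I ^ weylPhaseExponent x := by
    rw [dotProduct_comm, ← neg_one_pow_weylPhaseExponent, ← mul_pow]
    simp
  rw [conjTranspose_apply, Weyl_apply, Weyl_apply, star_mul', star_phase]
  by_cases h : k = j + x.1
  · have hj : j = k + x.1 := by rw [h, add_assoc, ZModModule.add_self, add_zero]
    rw [if_pos h, if_pos hj, h, dotProduct_add, AddChar.map_add_eq_mul, star_mul',
      star_signChar, star_signChar]
    linear_combination (Complex.I ^ weylPhaseExponent x * signChar ℂ (x.2 ⬝ᵥ j)) *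
      signChar_mul_self (R := ℂ) (x.2 ⬝ᵥ x.1)
  · have hj : j ≠ k + x.1 := by
      rintro rfl
      exact h (by rw [add_assoc, ZModModule.add_self, add_zero])
    simp [h, hj]

end WeylOperators

section RankOneProjectors

variable {n : ℕ}

lemma trace_outer (φ : (Fin n → ZMod 2) → ℂ) :
    (outer φ).trace = ∑ j, (Complex.normSq (φ j) : ℂ) := by
  simp [outer, trace_vecMulVec, dotProduct, Complex.mul_conj]

lemma mul_outer_mul_conjTranspose (A : Matrix (Fin n → ZMod 2) (Fin n → ZMod 2) ℂ)
    (φ : (Fin n → ZMod 2) → ℂ) : A * outer φ * Aᴴ = outer (A *ᵥ φ) := by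
  change A * vecMulVec φ (star φ) * Aᴴ = vecMulVec (A *ᵥ φ) (star (A *ᵥ φ))
  rw [mul_vecMulVec, vecMulVec_mul, star_mulVec]

lemma outer_neg (φ : (Fin n → ZMod 2) → ℂ) : outer (-φ) = outer φ := by
  ext k j
  simp [outer, vecMulVec_apply]

lemma trace_outer_Weyl_mulVec (v : PhaseSpace n) (φ : (Fin n → ZMod 2) → ℂ) :
    (outer (Weyl v *ᵥ φ)).trace = (outer φ).trace := by
  rw [← mul_outer_mul_conjTranspose, conjTranspose_Weyl, trace_mul_cycle, Weyl_mul_self, one_mul]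

lemma outer_Weyl_mulVec_apply (v : PhaseSpace n) (φ : (Fin n → ZMod 2) → ℂ)
    (k j : Fin n → ZMod 2) : outer (Weyl v *ᵥ φ) k j =
      signChar ℂ (v.2 ⬝ᵥ (k + j)) * (φ (k + v.1) * star (φ (j + v.1))) := by
  have phase_norm :
      Complex.I ^ weylPhaseExponent v * star (Complex.I ^ weylPhaseExponent v) = 1 := by
    rw [star_pow, ← mul_pow]
    simp
  have sign_sq := signChar_mul_self (R := ℂ) (v.2 ⬝ᵥ v.1)
  rw [outer, vecMulVec_apply, ← Complex.star_def, Weyl_mulVec_apply, Weyl_mulVec_apply, star_mul',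
    star_mul', star_signChar]
  simp only [dotProduct_add, AddChar.map_add_eq_mul]
  grind

lemma sum_outer_Weyl_mulVec (φ : (Fin n → ZMod 2) → ℂ) :
    ∑ v, outer (Weyl v *ᵥ φ) = (2 ^ n * (outer φ).trace) • 1 := by
  ext k j
  have add_eq_zero_iff : k + j = 0 ↔ k = j := by rw [← ZModModule.sub_eq_add, sub_eq_zero]
  have sum_translate : ∑ a, φ (k + a) * star (φ (k + a)) = (outer φ).trace :=
    Equiv.sum_comp (Equiv.addLeft k) fun i => φ i * star (φ i)
  calc (∑ v, outer (Weyl v *ᵥ φ)) k j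
      = ∑ a, (∑ b, signChar ℂ (b ⬝ᵥ (k + j))) * (φ (k + a) * star (φ (j + a))) := by
        simp only [Matrix.sum_apply, Fintype.sum_prod_type, outer_Weyl_mulVec_apply,
          Finset.sum_mul]
    _ = ((2 ^ n * (outer φ).trace) • (1 : Matrix (Fin n → ZMod 2) (Fin n → ZMod 2) ℂ)) k j := by
        rw [← Finset.mul_sum, sum_signChar_dotProduct, Matrix.smul_apply,
          Matrix.one_apply]
        simp only [add_eq_zero_iff]
        split_ifs with h
        · rw [← h, sum_translate, smul_eq_mul, mul_one]
        · simp

lemma trace_mul_outer_nonneg {ρ : Matrix (Fin n → ZMod 2) (Fin n → ZMod 2) ℂ} (hρ : ρ.PosSemidef)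
    (φ : (Fin n → ZMod 2) → ℂ) : 0 ≤ (ρ * outer φ).trace := by
  rw [outer, mul_vecMulVec, trace_vecMulVec, dotProduct_comm]
  exact hρ.dotProduct_mulVec_nonneg φ

end RankOneProjectors

lemma exists_ne_zero_forall_apply_eq_or_eq_neg {R M ι : Type*} [Ring R] [AddCommGroup M]
    [Module R M] [Nontrivial M] (s : Finset ι) (T : ι → Module.End R M)
    (hsq : ∀ i ∈ s, T i * T i = 1) (hcomm : ∀ i ∈ s, ∀ j ∈ s, Commute (T i) (T j)) :
    ∃ v ≠ 0, ∀ i ∈ s, T i v = v ∨ T i v = -v := by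
  classical
  induction s using Finset.induction_on with
  | empty => simpa using exists_ne (0 : M)
  | insert i s _ ih =>
    simp only [Finset.forall_mem_insert] at hsq hcomm ⊢
    obtain ⟨v, hv, hs⟩ := ih hsq.2 fun j hj k hk => (hcomm.2 j hj).2 k hk
    -- `v + T i v` is fixed by `T i`, and it vanishes only if `T i v = -v`.
    by_cases h : v + T i v = 0
    · exact ⟨v, hv, .inr (neg_eq_of_add_eq_zero_right h).symm, hs⟩
    · refine ⟨v + T i v, h, .inl ?_, fun j hj => ?_⟩
      · rw [map_add, ← Module.End.mul_apply, hsq.1, Module.End.one_apply, add_comm]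
      · rw [map_add, ← Module.End.mul_apply, ((hcomm.2 j hj).1).eq, Module.End.mul_apply]
        rcases hs j hj with hj | hj
        · exact .inl (by rw [hj])
        · exact .inr (by rw [hj, map_neg, neg_add])

section WeylEigenvectors

variable {n : ℕ} {L S : Set (PhaseSpace n)} {φ : (Fin n → ZMod 2) → ℂ}

/-- `φ` is a joint eigenvector, with eigenvalues `±1`, of the Weyl operators `W_x` for `x ∈ S`.
The eigenvalue is encoded by an exponent `z ∈ 𝔽₂`. -/
def IsWeylEigenvector (S : Set (PhaseSpace n)) (φ : (Fin n → ZMod 2) → ℂ) : Prop :=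
  ∀ x ∈ S, ∃ z : ZMod 2, Weyl x *ᵥ φ = signChar ℂ z • φ

lemma Weyl_mulVec_Weyl_mulVec_of_eigenvector {x : PhaseSpace n} {z : ZMod 2}
    (h : Weyl x *ᵥ φ = signChar ℂ z • φ) (v : PhaseSpace n) :
    Weyl x *ᵥ Weyl v *ᵥ φ = signChar ℂ (sympl x v + z) • Weyl v *ᵥ φ := by
  rw [Weyl_mulVec_Weyl_mulVec, h, mulVec_smul, smul_smul, AddChar.map_add_eq_mul]

lemma IsWeylEigenvector.Weyl_mulVec (hφ : IsWeylEigenvector S φ) (v : PhaseSpace n) :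
    IsWeylEigenvector S (Weyl v *ᵥ φ) := fun x hx =>
  let ⟨z, hz⟩ := hφ x hx
  ⟨sympl x v + z, Weyl_mulVec_Weyl_mulVec_of_eigenvector hz v⟩

lemma IsWeylEigenvector.smul (hφ : IsWeylEigenvector S φ) (c : ℂ) :
    IsWeylEigenvector S (c • φ) := fun x hx =>
  let ⟨z, hz⟩ := hφ x hx
  ⟨z, by rw [mulVec_smul, hz, smul_comm]⟩

lemma exists_trace_outer_smul_eq_one (hφ : φ ≠ 0) : ∃ c : ℂ, (outer (c • φ)).trace = 1 := by
  set u : EuclideanSpace ℂ (Fin n → ZMod 2) := WithLp.toLp 2 φ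
  have hu : u ≠ 0 := by simpa [u] using hφ
  refine ⟨(‖u‖ : ℂ)⁻¹, ?_⟩
  have norm_eq_one : ‖(‖u‖ : ℂ)⁻¹ • u‖ = 1 := norm_smul_inv_norm (𝕜 := ℂ) hu
  have sum_eq_one := EuclideanSpace.norm_sq_eq ((‖u‖ : ℂ)⁻¹ • u)
  rw [norm_eq_one, one_pow] at sum_eq_one
  simp only [trace_outer, Complex.normSq_eq_norm_sq]
  exact_mod_cast sum_eq_one.symm

lemma IsLagrangian.exists_isWeylEigenvector (hL : IsLagrangian L) :
    ∃ φ, (outer φ).trace = 1 ∧ IsWeylEigenvector L φ := by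
  have commute (x : PhaseSpace n) (hx : x ∈ L) (y : PhaseSpace n) (hy : y ∈ L) :
      Commute (toLin' (Weyl x)) (toLin' (Weyl y)) := by
    rw [Commute, SemiconjBy, Module.End.mul_eq_comp, Module.End.mul_eq_comp, ← toLin'_mul,
      ← toLin'_mul, Weyl_mul_comm, hL.mem_iff.1 hx y hy, AddChar.map_zero_eq_one, one_smul]
  obtain ⟨φ, φ_ne_zero, hφ⟩ := exists_ne_zero_forall_apply_eq_or_eq_neg L.toFinite.toFinset
    (fun x => toLin' (Weyl x))
    (fun x _ => by rw [Module.End.mul_eq_comp, ← toLin'_mul, Weyl_mul_self, toLin'_one]; rfl)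
    (by simpa using commute)
  obtain ⟨c, hc⟩ := exists_trace_outer_smul_eq_one φ_ne_zero
  refine ⟨c • φ, hc, IsWeylEigenvector.smul (fun x hx => ?_) c⟩
  rcases hφ x (by simpa using hx) with h | h
  · exact ⟨0, by simpa using h⟩
  · exact ⟨1, by simpa using h⟩

lemma mul_outer_of_mulVec_eq_smul {A : Matrix (Fin n → ZMod 2) (Fin n → ZMod 2) ℂ} {c : ℂ}
    (h : A *ᵥ φ = c • φ) : A * outer φ = c • outer φ := by
  rw [outer, mul_vecMulVec, h, smul_vecMulVec]

lemma IsWeylEigenvector.mul_outer_mul_Weyl (hφ : IsWeylEigenvector S φ) {y : PhaseSpace n}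
    (hy : y ∈ S) : Weyl y * outer φ * Weyl y = outer φ := by
  obtain ⟨z, hz⟩ := hφ y hy
  nth_rw 2 [← conjTranspose_Weyl]
  rw [mul_outer_mul_conjTranspose, hz]
  rcases signChar_eq_one_or_eq_neg_one (R := ℂ) z with h | h <;> simp [h, outer_neg]

-- Conjugation by `W_y` fixes `outer φ` but flips the sign of `W_x` whenever `[x, y] = 1`.
lemma IsWeylEigenvector.trace_Weyl_mul_outer_eq_zero (hφ : IsWeylEigenvector S φ)
    {x y : PhaseSpace n} (hy : y ∈ S) (hxy : sympl x y = 1) : (Weyl x * outer φ).trace = 0 := by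
  rw [← CharZero.eq_neg_self_iff]
  calc (Weyl x * outer φ).trace
      = (Weyl x * (Weyl y * outer φ * Weyl y)).trace := by rw [hφ.mul_outer_mul_Weyl hy]
    _ = -(Weyl y * Weyl x * outer φ * Weyl y).trace := by
        rw [Matrix.mul_assoc (Weyl y), ← Matrix.mul_assoc, Weyl_mul_comm, hxy, signChar_one]
        simp only [neg_smul, one_smul, Matrix.neg_mul, trace_neg, Matrix.mul_assoc]
    _ = -(Weyl x * outer φ).trace := by
        rw [Matrix.mul_assoc (Weyl y), Matrix.mul_assoc, trace_mul_comm, Matrix.mul_assoc,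
          Weyl_mul_self, mul_one]

lemma IsWeylEigenvector.weylSet_outer (hL : IsLagrangian L) (hφ : IsWeylEigenvector L φ)
    (unit : (outer φ).trace = 1) : weylSet (outer φ) = L := by
  ext x
  refine ⟨fun hx => ?_, fun hx => ?_⟩
  · by_contra hxL
    obtain ⟨y, hy, hxy⟩ := hL.exists_sympl_eq_one hxL
    simp [weylSet, hφ.trace_Weyl_mul_outer_eq_zero hy hxy] at hx
  · obtain ⟨z, hz⟩ := hφ x hx
    rw [weylSet, Set.mem_ofPred_eq, mul_outer_of_mulVec_eq_smul hz, trace_smul, unit, smul_eq_mul,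
      mul_one]
    exact signChar_eq_one_or_eq_neg_one z

lemma IsWeylEigenvector.isStabilizerState (hL : IsLagrangian L) (hφ : IsWeylEigenvector L φ)
    (unit : (outer φ).trace = 1) : IsStabilizerState φ := by
  refine ⟨?_, by rwa [hφ.weylSet_outer hL unit]⟩
  rw [trace_outer] at unit
  exact_mod_cast unit

end WeylEigenvectors

section WeylOverlaps

variable {n : ℕ} {L : Set (PhaseSpace n)} {ρ : Matrix (Fin n → ZMod 2) (Fin n → ZMod 2) ℂ}
  {φ : (Fin n → ZMod 2) → ℂ}

/-- The overlap `⟨W_v φ| ρ |W_v φ⟩` of `ρ` with the translate of `φ` by `v`, as a function on phase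
space. It is the real part of a trace, so that it is real for every matrix `ρ`. -/
noncomputable def weylOverlap (ρ : Matrix (Fin n → ZMod 2) (Fin n → ZMod 2) ℂ)
    (φ : (Fin n → ZMod 2) → ℂ) (v : PhaseSpace n) : ℝ :=
  (ρ * outer (Weyl v *ᵥ φ)).trace.re

lemma weylOverlap_nonneg (hρ : ρ.PosSemidef) (φ : (Fin n → ZMod 2) → ℂ) (v : PhaseSpace n) :
    0 ≤ weylOverlap ρ φ v :=
  (Complex.nonneg_iff.1 (trace_mul_outer_nonneg hρ _)).1

lemma sum_weylOverlap (ρ : Matrix (Fin n → ZMod 2) (Fin n → ZMod 2) ℂ)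
    (unit : (outer φ).trace = 1) : ∑ v, weylOverlap ρ φ v = 2 ^ n * ρ.trace.re := by
  simp only [weylOverlap]
  rw [← Complex.re_sum, ← trace_sum, ← Finset.mul_sum, sum_outer_Weyl_mulVec, unit, mul_one,
    Matrix.mul_smul, mul_one, trace_smul, smul_eq_mul]
  exact_mod_cast Complex.re_ofReal_mul (2 ^ n) ρ.trace

lemma trace_mul_outer_le (hρ : ρ.PosSemidef) (unit : (outer φ).trace = 1) :
    (ρ * outer φ).trace.re ≤ 2 ^ n * ρ.trace.re :=
  calc (ρ * outer φ).trace.re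
      = weylOverlap ρ φ 0 := by rw [weylOverlap, Weyl_zero, one_mulVec]
    _ ≤ ∑ v, weylOverlap ρ φ v :=
        Finset.single_le_sum (fun v _ => weylOverlap_nonneg hρ φ v) (Finset.mem_univ 0)
    _ = 2 ^ n * ρ.trace.re := sum_weylOverlap ρ unit

lemma IsStabilizerState.trace_outer_eq_one (hφ : IsStabilizerState φ) : (outer φ).trace = 1 := by
  rw [trace_outer]
  exact_mod_cast hφ.1

lemma IsStabilizerState.le_stabFidelity (hρ : ρ.PosSemidef) (hφ : IsStabilizerState φ) :
    (ρ * outer φ).trace.re ≤ stabFidelity ρ := by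
  refine le_ciSup (f := fun ψ : {ψ // IsStabilizerState ψ} => (ρ * outer ψ.1).trace.re) ?_ ⟨φ, hφ⟩
  refine ⟨2 ^ n * ρ.trace.re, ?_⟩
  rintro _ ⟨ψ, rfl⟩
  exact trace_mul_outer_le hρ ψ.2.trace_outer_eq_one

lemma weylOverlap_le_stabFidelity (hρ : ρ.PosSemidef) (hL : IsLagrangian L)
    (hφ : IsWeylEigenvector L φ) (unit : (outer φ).trace = 1) (v : PhaseSpace n) :
    weylOverlap ρ φ v ≤ stabFidelity ρ := by
  have orbit_unit : (outer (Weyl v *ᵥ φ)).trace = 1 := by rw [trace_outer_Weyl_mulVec, unit]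
  exact ((hφ.Weyl_mulVec v).isStabilizerState hL orbit_unit).le_stabFidelity hρ

lemma trace_Weyl_mul_of_eigenvector (ρ : Matrix (Fin n → ZMod 2) (Fin n → ZMod 2) ℂ)
    (unit : (outer φ).trace = 1) {x : PhaseSpace n} {z : ZMod 2}
    (h : Weyl x *ᵥ φ = signChar ℂ z • φ) :
    2 ^ n * (Weyl x * ρ).trace =
      ∑ v, signChar ℂ (sympl x v + z) * (ρ * outer (Weyl v *ᵥ φ)).trace :=
  calc 2 ^ n * (Weyl x * ρ).trace
      = (ρ * (Weyl x * ∑ v, outer (Weyl v *ᵥ φ))).trace := by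
        rw [sum_outer_Weyl_mulVec, unit, mul_one, Matrix.mul_smul, Matrix.mul_smul, mul_one,
          trace_smul, trace_mul_comm, smul_eq_mul]
    _ = ∑ v, (ρ * (Weyl x * outer (Weyl v *ᵥ φ))).trace := by
        rw [Finset.mul_sum, Finset.mul_sum, trace_sum]
    _ = ∑ v, signChar ℂ (sympl x v + z) * (ρ * outer (Weyl v *ᵥ φ)).trace := by
        simp only [mul_outer_of_mulVec_eq_smul (Weyl_mulVec_Weyl_mulVec_of_eigenvector h _),
          Matrix.mul_smul, trace_smul, smul_eq_mul]

lemma IsWeylEigenvector.pFun_eq (hφ : IsWeylEigenvector L φ) (unit : (outer φ).trace = 1)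
    (ρ : Matrix (Fin n → ZMod 2) (Fin n → ZMod 2) ℂ) {x : PhaseSpace n} (hx : x ∈ L) :
    pFun ρ x = 2 ^ n * sft (weylOverlap ρ φ) x ^ 2 := by
  obtain ⟨z, hz⟩ := hφ x hx
  have trace_re : 2 ^ n * (Weyl x * ρ).trace.re =
      signChar ℝ z * (2 ^ n * 2 ^ n * sft (weylOverlap ρ φ) x) := by
    have h := congrArg Complex.re (trace_Weyl_mul_of_eigenvector ρ unit hz)
    rw [show (2 : ℂ) ^ n = ((2 ^ n : ℝ) : ℂ) by push_cast; rfl, Complex.re_ofReal_mul] at h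
    simp only [← ofReal_signChar, Complex.re_sum, Complex.re_ofReal_mul] at h
    rw [h, sft_eq_sum_signChar, four_pow_eq_two_pow_mul_two_pow, ← mul_assoc (2 ^ n * 2 ^ n),
      mul_one_div_cancel (by positivity), one_mul, Finset.mul_sum]
    refine Finset.sum_congr rfl fun v _ => ?_
    rw [weylOverlap, AddChar.map_add_eq_mul]
    ring
  have trace_eq : (Weyl x * ρ).trace.re = signChar ℝ z * (2 ^ n * sft (weylOverlap ρ φ) x) := by
    refine mul_left_cancel₀ (pow_ne_zero n two_ne_zero) (trace_re.trans ?_)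
    ring
  have sign_sq := signChar_mul_self (R := ℝ) z
  rw [pFun, trace_eq, mul_pow, sq (signChar ℝ z), sign_sq]
  field_simp

theorem sum_pFun_le_stabFidelity_mul_trace [Fintype L] (hρ : ρ.PosSemidef)
    (hL : IsLagrangian L) : ∑ x : L, pFun ρ x ≤ stabFidelity ρ * ρ.trace.re := by
  obtain ⟨φ, unit, hφ⟩ := hL.exists_isWeylEigenvector
  set q := weylOverlap ρ φ
  have autocorrelation_le (w : PhaseSpace n) :
      ∑ v, q v * q (v + w) ≤ stabFidelity ρ * (2 ^ n * ρ.trace.re) := by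
    rw [← sum_weylOverlap ρ unit, mul_comm, Finset.sum_mul]
    exact Finset.sum_le_sum fun v _ => mul_le_mul_of_nonneg_left
      (weylOverlap_le_stabFidelity hρ hL hφ unit _) (weylOverlap_nonneg hρ φ v)
  calc ∑ x : L, pFun ρ x
      = 2 ^ n * ∑ x : L, sft q x ^ 2 := by
        rw [Finset.mul_sum]
        exact Finset.sum_congr rfl fun x _ => hφ.pFun_eq unit ρ x.2
    _ = 1 / 4 ^ n * (2 ^ n * ∑ x : L, sft (fun w => ∑ v, q v * q (v + w)) x) := by
        simp only [sft_autocorrelation, ← Finset.mul_sum]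
        field_simp
    _ = 1 / 4 ^ n * ∑ w : L, ∑ v, q v * q (v + w) := by rw [hL.sum_sft]
    _ ≤ 1 / 4 ^ n * ∑ w : L, stabFidelity ρ * (2 ^ n * ρ.trace.re) := by
        gcongr with w
        exact autocorrelation_le w
    _ = stabFidelity ρ * ρ.trace.re := by
        rw [Finset.sum_const, Finset.card_univ, hL.card_eq, nsmul_eq_mul, Nat.cast_pow,
          Nat.cast_two, four_pow_eq_two_pow_mul_two_pow]
        field_simp

end WeylOverlaps

/-- For every n-qubit mixed state ρ and every Lagrangian subspace L,
F(ρ) ≥ 2^n ∑_{x ∈ L} p̂_ρ(x). -/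
theorem stabFidelity_ge_sum_sft_pFun {n : ℕ}
    (ρ : Matrix (Fin n → ZMod 2) (Fin n → ZMod 2) ℂ)
    (hρ : ρ.PosSemidef) (hτ : ρ.trace = 1)
    (L : Set (PhaseSpace n)) (hLag : IsLagrangian L) :
    stabFidelity ρ ≥ 2 ^ n * ∑ x, L.indicator (sft (pFun ρ)) x := by
  classical
  calc 2 ^ n * ∑ x, L.indicator (sft (pFun ρ)) x
      = 2 ^ n * ∑ x : L, sft (pFun ρ) x := by rw [sum_indicator_eq_sum_coe]
    _ = ∑ x : L, pFun ρ x := hLag.sum_sft (pFun ρ)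
    _ ≤ stabFidelity ρ * ρ.trace.re := sum_pFun_le_stabFidelity_mul_trace hρ hLag
    _ = stabFidelity ρ := by rw [hτ, Complex.one_re, mul_one]
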